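/- Let Y_n ⊂ ℝ² be a Π_n-poised set and suppose there exist linearly independent polynomials h_0, …, h_{n+1} ∈ Π_{n+1} ∩ I(Y_n) that admit a linear syzygy matrix Σ(x) ∈ Π_1^{(n+1)×(n+2)} of rank n + 1 whose j-th column equals k(x)·e_i for some nonconstant k ∈ Π_1, some standard unit vector e_i (1 ≤ i ≤ n+1) and some column index j ∈ {0,…,n+1}. Then K = V(k) is a maximal line for Y_n, i.e., #(K ∩ Y_n) = n + 1. -/

import Mathlib

open MvPolynomial

noncomputable section

abbrev Pt : Type := Fin 2 → ℝ
abbrev BPoly : Type := MvPolynomial (Fin 2) ℝ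

/-- `Π_n`: the space of bivariate polynomials of total degree at most `n`. -/
def PiLE (n : ℕ) : Submodule ℝ BPoly := MvPolynomial.restrictTotalDegree (Fin 2) ℝ n

/-- The vanishing ideal `I(Y)` of a set `Y ⊆ ℝ²`. -/
def vIdeal (Y : Set Pt) : Ideal BPoly where
  carrier := {p | ∀ y ∈ Y, eval y p = 0}
  add_mem' := by
    intro a b ha hb y hy
    simp [map_add, ha y hy, hb y hy]
  zero_mem' := by intro y hy; simp
  smul_mem' := by
    intro c a ha y hy
    simp [smul_eq_mul, ha y hy]

/-- `I(Y)` as an `ℝ`-subspace of `Π`. -/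
def vSub (Y : Set Pt) : Submodule ℝ BPoly := (vIdeal Y).restrictScalars ℝ

/-- `Y` is `Π_n`-poised: every interpolation problem on `Y` has a unique solution in `Π_n`. -/
def Poised (n : ℕ) (Y : Finset Pt) : Prop :=
  ∀ f : Pt → ℝ, ∃! p : BPoly, p ∈ PiLE n ∧ ∀ y ∈ Y, eval y p = f y

/-- `Y` is `Π_n`-independent: every interpolation problem on `Y` has a solution in `Π_n`. -/
def PIndep (n : ℕ) (Y : Finset Pt) : Prop :=
  ∀ f : Pt → ℝ, ∃ p ∈ PiLE n, ∀ y ∈ Y, eval y p = f y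

/-- `ℓ y` is the fundamental (Lagrange) polynomial of `y ∈ Y` in `Π_n`. -/
def IsFundamental (n : ℕ) (Y : Finset Pt) (ℓ : Pt → BPoly) : Prop :=
  ∀ y ∈ Y, ℓ y ∈ PiLE n ∧ ∀ y' ∈ Y, eval y' (ℓ y) = if y' = y then 1 else 0

/-- A finite family is an H-basis of the ideal `I`. -/
def IsHBasisFam {ι : Type} [Fintype ι] (I : Ideal BPoly) (h : ι → BPoly) : Prop :=
  (∀ i, h i ∈ I) ∧ ∀ f ∈ I, ∃ g : ι → BPoly,
    (∀ i, (g i).totalDegree ≤ f.totalDegree - (h i).totalDegree) ∧ f = ∑ i, g i * h i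

/-- A finite set is an H-basis of the ideal `I`. -/
def IsHBasisSet (I : Ideal BPoly) (H : Finset BPoly) : Prop :=
  (∀ p ∈ H, p ∈ I) ∧ ∀ f ∈ I, ∃ g : BPoly → BPoly,
    (∀ p ∈ H, (g p).totalDegree ≤ f.totalDegree - p.totalDegree) ∧ f = ∑ p ∈ H, g p * p

/-- `M` is a linear syzygy matrix for the family `h`. -/
def IsLinSyz (n : ℕ) (h : Fin (n + 2) → BPoly)
    (M : Matrix (Fin (n + 1)) (Fin (n + 2)) BPoly) : Prop :=
  (∀ i j, M i j ∈ PiLE 1) ∧ ∀ i, ∑ j, M i j * h j = 0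

/-- The rank of a polynomial matrix over the field of rational functions. -/
def ratRank {a b : ℕ} (M : Matrix (Fin a) (Fin b) BPoly) : ℕ :=
  (M.map (algebraMap BPoly (FractionRing BPoly))).rank

/-!
The rank condition makes the vector of signed maximal minors of `M` nonzero and, by Cramer's rule,
proportional to `h`. The polynomials `h` span `Π_{n+1} ∩ I(Y)`, whose elements have no common
factor: a common factor divides `(X a - y a) * ℓ y` for both coordinates `a` and every fundamental
polynomial `ℓ y`, hence `ℓ y` itself, hence `∑ ℓ y = 1`. So each `h l` divides the corresponding
minor, and since the minor has degree at most `n + 1 = deg (h l)` the two agree up to a constant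
(as in the Hilbert–Burch theorem). If `k` divides column `j`, it divides every minor that keeps this
column, and so `n + 1` of the `h l`. Dividing these by `k` gives `n + 1` independent elements of
`Π_n ∩ I(Y \ K)`, a space of dimension `#(Y ∩ K)`. The dimension is also at most `n + 1`, that of
the space of forms of degree `n`: a nonzero element has degree exactly `n`, as its product with `k`
vanishes on `Y`.
-/

section Minors

open Matrix

variable {R : Type*} [CommRing R] {m : ℕ}

/-- The maximal minor of an `m × (m + 1)` matrix that omits column `l`, with the sign of its
cofactor when a row is added on top. -/
def signedMinor (A : Matrix (Fin m) (Fin (m + 1)) R) (l : Fin (m + 1)) : R :=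
  (-1) ^ (l : ℕ) * (A.submatrix id l.succAbove).det

lemma det_vecCons_eq_dotProduct_signedMinor (A : Matrix (Fin m) (Fin (m + 1)) R)
    (r : Fin (m + 1) → R) : (of (vecCons r A)).det = r ⬝ᵥ signedMinor A := by
  rw [det_succ_row_zero]
  exact Finset.sum_congr rfl fun l _ => (mul_assoc _ _ _).trans (mul_left_comm _ _ _)

lemma adjugate_vecCons_apply_zero (A : Matrix (Fin m) (Fin (m + 1)) R) (r : Fin (m + 1) → R)
    (l : Fin (m + 1)) : (of (vecCons r A)).adjugate l 0 = signedMinor A l := by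
  rw [adjugate_fin_succ_eq_det_submatrix, Fin.val_zero, zero_add]
  rfl

lemma mul_signedMinor_comm_of_mulVec_eq_zero {A : Matrix (Fin m) (Fin (m + 1)) R}
    {v : Fin (m + 1) → R} (hv : A *ᵥ v = 0) (a b : Fin (m + 1)) :
    v a * signedMinor A b = signedMinor A a * v b := by
  let N := of (vecCons (Pi.single a 1) A)
  have hN : N *ᵥ v = Pi.single 0 (v a) := by
    refine (cons_mulVec _ _ v).trans (funext (Fin.cases ?_ fun i => ?_))
    · simp
    · exact congrFun hv i
  have cramer : N.adjugate *ᵥ (N *ᵥ v) = N.det • v := by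
    rw [mulVec_mulVec, adjugate_mul, smul_mulVec, one_mulVec]
  have cramer_b := congrFun cramer b
  rwa [hN, mulVec_single, Pi.smul_apply, det_vecCons_eq_dotProduct_signedMinor,
    single_one_dotProduct, col_apply, adjugate_vecCons_apply_zero, Pi.smul_apply, op_smul_eq_smul,
    smul_eq_mul, smul_eq_mul] at cramer_b

lemma exists_signedMinor_ne_zero_of_rank_eq {K : Type*} [Field K]
    {A : Matrix (Fin m) (Fin (m + 1)) K} (hA : A.rank = m) : ∃ l, signedMinor A l ≠ 0 := by
  have hrows : LinearIndependent K A.row := by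
    rw [linearIndependent_iff_card_eq_finrank_span, Set.finrank, ← rank_eq_finrank_span_row, hA,
      Fintype.card_fin]
  obtain ⟨r, hr⟩ : ∃ r, r ∉ Submodule.span K (Set.range A.row) := by
    refine SetLike.exists_not_mem_of_ne_top _ (fun htop => ?_) rfl
    have hfin := A.rank_eq_finrank_span_row
    rw [htop, finrank_top, Module.finrank_fin_fun, hA] at hfin
    omega
  have hdet : (of (vecCons r A)).det ≠ 0 := by
    rw [← isUnit_iff_ne_zero, ← isUnit_iff_isUnit_det, ← linearIndependent_rows_iff_isUnit]
    exact linearIndependent_finCons.2 ⟨hrows, hr⟩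
  by_contra! hzero
  exact hdet (by rw [det_vecCons_eq_dotProduct_signedMinor, funext hzero]; exact dotProduct_zero r)

lemma signedMinor_map {S : Type*} [CommRing S] (φ : R →+* S) (A : Matrix (Fin m) (Fin (m + 1)) R)
    (l : Fin (m + 1)) : signedMinor (A.map φ) l = φ (signedMinor A l) := by
  simp only [signedMinor, map_mul, map_pow, map_neg, map_one, φ.map_det, φ.mapMatrix_apply,
    submatrix_map]

lemma signedMinor_ne_zero_of_mulVec_eq_zero [IsDomain R] {A : Matrix (Fin m) (Fin (m + 1)) R}
    (hA : (A.map (algebraMap R (FractionRing R))).rank = m) {v : Fin (m + 1) → R}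
    (hv : A *ᵥ v = 0) {l : Fin (m + 1)} (hl : v l ≠ 0) : signedMinor A l ≠ 0 := by
  obtain ⟨b, hb⟩ := exists_signedMinor_ne_zero_of_rank_eq hA
  rw [signedMinor_map] at hb
  have hprod := mul_ne_zero hl (ne_zero_of_map hb)
  rw [mul_signedMinor_comm_of_mulVec_eq_zero hv l b] at hprod
  exact left_ne_zero_of_mul hprod

lemma dvd_det_of_forall_dvd_column {ι : Type*} [Fintype ι] [DecidableEq ι] {A : Matrix ι ι R}
    {k : R} (j : ι) (hk : ∀ i, k ∣ A i j) : k ∣ A.det := by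
  rw [det_apply']
  exact Finset.dvd_sum fun σ _ =>
    ((hk (σ j)).trans (Finset.dvd_prod_of_mem (fun i => A (σ i) i) (Finset.mem_univ j))).mul_left _

lemma dvd_signedMinor_of_forall_dvd_column {A : Matrix (Fin m) (Fin (m + 1)) R} {k : R}
    {j l : Fin (m + 1)} (hjl : j ≠ l) (hk : ∀ i, k ∣ A i j) : k ∣ signedMinor A l := by
  obtain ⟨j', rfl⟩ := Fin.exists_succAbove_eq hjl
  exact (dvd_det_of_forall_dvd_column j' hk).mul_left _

end Minors

section Divisibility

lemma dvd_of_forall_dvd_mul {α ι : Type*} [CommMonoidWithZero α] [UniqueFactorizationMonoid α]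
    [Finite ι] {f : ι → α} (hf : ∀ d, (∀ l, d ∣ f l) → IsUnit d) {x a : α}
    (hx : ∀ l, x ∣ a * f l) : x ∣ a := by
  have := Fintype.ofFinite ι
  obtain ⟨_⟩ : Nonempty (NormalizedGCDMonoid α) := inferInstance
  have hunit : IsUnit (Finset.univ.gcd f) := hf _ fun l => Finset.gcd_dvd (Finset.mem_univ l)
  have hgcd : x ∣ Finset.univ.gcd fun l => a * f l := Finset.dvd_gcd fun l _ => hx l
  exact hunit.dvd_mul_right.1 (hgcd.trans (Finset.gcd_mul_left' _ f a).dvd)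

variable {σ K : Type*} [Field K]

lemma isRelPrime_X_sub_C_X_sub_C {a b : σ} (hab : a ≠ b) (s t : K) :
    IsRelPrime (X a - C s : MvPolynomial σ K) (X b - C t) := by
  classical
  have hdeg : (X a - C s : MvPolynomial σ K).totalDegree = 1 := by
    rw [sub_eq_add_neg, ← C_neg, totalDegree_add_eq_left_of_totalDegree_lt] <;> simp
  have hirr : Irreducible (X a - C s : MvPolynomial σ K) := by
    refine irreducible_of_totalDegree_eq_one hdeg fun x hx => isUnit_iff_ne_zero.2 ?_
    rintro rfl
    have hzero : (X a - C s : MvPolynomial σ K) = 0 := by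
      ext m
      exact zero_dvd_iff.1 (hx m)
    simp [hzero] at hdeg
  rw [hirr.isRelPrime_iff_not_dvd]
  rintro ⟨r, hr⟩
  have heval := congrArg (eval (Function.update (fun _ => s) b (t + 1))) hr
  simp [hab] at heval

lemma associated_of_dvd_of_totalDegree_le {p q : MvPolynomial σ K} (hpq : p ∣ q) (hq : q ≠ 0)
    (hdeg : q.totalDegree ≤ p.totalDegree) : Associated p q := by
  obtain ⟨r, rfl⟩ := hpq
  obtain ⟨hp, hr⟩ := mul_ne_zero_iff.1 hq
  rw [totalDegree_mul_of_isDomain hp hr] at hdeg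
  have hr_const : r = C (r.coeff 0) := totalDegree_eq_zero_iff_eq_C.1 (by omega)
  have hr_coeff : r.coeff 0 ≠ 0 := fun h0 => hr (by rw [hr_const, h0, C_0])
  refine associated_mul_unit_right p r ?_
  rw [hr_const]
  exact (isUnit_iff_ne_zero.2 hr_coeff).map C

end Divisibility

section Degree

variable {R : Type*} [CommRing R]

lemma totalDegree_det_le {σ ι : Type*} [Fintype ι] [DecidableEq ι]
    {A : Matrix ι ι (MvPolynomial σ R)} {d : ℕ} (hA : ∀ i j, (A i j).totalDegree ≤ d) :
    A.det.totalDegree ≤ Fintype.card ι * d := by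
  rw [Matrix.det_apply]
  refine totalDegree_finsetSum_le fun τ _ => (totalDegree_smul_le _ _).trans ?_
  refine (totalDegree_finsetProd _ _).trans ((Finset.sum_le_sum fun i _ => hA (τ i) i).trans ?_)
  simp

lemma totalDegree_signedMinor_le {σ : Type*} {m d : ℕ}
    {A : Matrix (Fin m) (Fin (m + 1)) (MvPolynomial σ R)} (hA : ∀ i j, (A i j).totalDegree ≤ d)
    (l : Fin (m + 1)) : (signedMinor A l).totalDegree ≤ m * d := by
  have hsign : signedMinor A l =
      C ((-1) ^ (l : ℕ)) * (A.submatrix id l.succAbove).det := by simp [signedMinor]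
  have hdet : (A.submatrix id l.succAbove).det.totalDegree ≤ m * d := by
    simpa using totalDegree_det_le (A := A.submatrix id l.succAbove) fun i j => hA _ _
  rw [hsign]
  exact (totalDegree_mul _ _).trans (by rwa [totalDegree_C, zero_add])

/-- The coefficients of the degree-`m` part of a polynomial in two variables, indexed by the
exponent of the first variable. -/
def topCoeff (m : ℕ) : MvPolynomial (Fin 2) R →ₗ[R] (Fin (m + 1) → R) :=
  LinearMap.pi fun a => lcoeff R (Finsupp.single 0 (a : ℕ) + Finsupp.single 1 (m - (a : ℕ)))

lemma eq_zero_or_totalDegree_lt_of_topCoeff_eq_zero {m : ℕ} {p : MvPolynomial (Fin 2) R}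
    (hp : p.totalDegree ≤ m) (htop : topCoeff m p = 0) : p = 0 ∨ p.totalDegree < m := by
  refine or_iff_not_imp_left.2 fun hp0 => lt_of_le_of_ne hp fun hdeg => ?_
  obtain ⟨s, hs, hsdeg⟩ := p.support.exists_mem_eq_sup (support_nonempty.2 hp0)
    fun s => s.sum fun _ e => e
  have hsum : s 0 + s 1 = m := by
    rw [← hdeg, totalDegree, hsdeg, Finsupp.sum_fintype _ _ fun _ => rfl, Fin.sum_univ_two]
  have hexp : Finsupp.single 0 (s 0) + Finsupp.single 1 (m - s 0) = s :=
    Finsupp.ext (Fin.forall_fin_two.2 ⟨by simp, by simp [← hsum]⟩)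
  refine mem_support_iff.1 hs ?_
  rw [← hexp]
  exact congrFun htop ⟨s 0, by omega⟩

variable {m : ℕ} {W : Submodule R (MvPolynomial (Fin 2) R)}

lemma topCoeff_comp_subtype_injective (hW : W ≤ restrictTotalDegree (Fin 2) R m)
    (hlt : ∀ p ∈ W, p.totalDegree < m → p = 0) :
    Function.Injective (topCoeff m ∘ₗ W.subtype) := by
  refine (injective_iff_map_eq_zero _).2 fun p hp => Subtype.ext ?_
  exact (eq_zero_or_totalDegree_lt_of_topCoeff_eq_zero
    ((mem_restrictTotalDegree _ _ _).1 (hW p.2)) hp).elim id (hlt p p.2)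

end Degree

lemma mem_PiLE {n : ℕ} {p : BPoly} : p ∈ PiLE n ↔ p.totalDegree ≤ n :=
  mem_restrictTotalDegree _ _ _

lemma mem_vSub {Y : Set Pt} {p : BPoly} : p ∈ vSub Y ↔ ∀ y ∈ Y, eval y p = 0 :=
  Iff.rfl

lemma mul_mem_vSub_iff {Y : Set Pt} {k p : BPoly} :
    k * p ∈ vSub Y ↔ p ∈ vSub (Y \ {x | eval x k = 0}) := by
  simp only [mem_vSub, map_mul, mul_eq_zero, Set.mem_sdiff, Set.mem_ofPred_eq, and_imp,
    or_iff_not_imp_left]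

lemma mul_mem_PiLE_succ_iff {n : ℕ} {k p : BPoly} (hk : k.totalDegree = 1) :
    k * p ∈ PiLE (n + 1) ↔ p ∈ PiLE n := by
  have hk0 : k ≠ 0 := by rintro rfl; simp at hk
  rcases eq_or_ne p 0 with rfl | hp
  · simp
  · rw [mem_PiLE, mem_PiLE, totalDegree_mul_of_isDomain hk0 hp, hk]
    omega

namespace Poised

variable {n : ℕ} {Y : Finset Pt}

lemma eq_zero (hY : Poised n Y) {p : BPoly} (hp : p ∈ PiLE n) (hpY : p ∈ vSub (Y : Set Pt)) :
    p = 0 :=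
  (hY 0).unique ⟨hp, hpY⟩ ⟨zero_mem _, fun y _ => map_zero (eval y)⟩

lemma exists_isFundamental (hY : Poised n Y) : ∃ ℓ, IsFundamental n Y ℓ := by
  choose ℓ hℓ _ using fun y => hY fun y' => if y' = y then 1 else 0
  exact ⟨ℓ, fun y _ => hℓ y⟩

lemma sum_eq_one_of_isFundamental (hY : Poised n Y) {ℓ : Pt → BPoly}
    (hℓ : IsFundamental n Y ℓ) : ∑ y ∈ Y, ℓ y = 1 := by
  refine sub_eq_zero.1 (hY.eq_zero (sub_mem (sum_mem fun y hy => (hℓ y hy).1) ?_) fun y hy => ?_)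
  · simp [mem_PiLE]
  · rw [map_sub, map_sum, Finset.sum_congr rfl fun x hx => (hℓ x hx).2 y hy]
    simp [Finset.mem_coe.1 hy]

lemma isUnit_of_forall_dvd (hY : Poised n Y) {d : BPoly}
    (hd : ∀ f ∈ PiLE (n + 1) ⊓ vSub (Y : Set Pt), d ∣ f) : IsUnit d := by
  obtain ⟨ℓ, hℓ⟩ := hY.exists_isFundamental
  have hdvd_mul (y) (hy : y ∈ Y) (a : Fin 2) : d ∣ ℓ y * (X a - C (y a)) := by
    refine hd _ ⟨mem_PiLE.2 ((totalDegree_mul _ _).trans (add_le_add (mem_PiLE.1 (hℓ y hy).1) ?_)),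
      fun y' hy' => ?_⟩
    · exact (totalDegree_sub_C_le _ _).trans (totalDegree_X a).le
    · rw [map_mul, (hℓ y hy).2 y' hy']
      split_ifs with heq <;> simp [heq]
  have hdvd (y) (hy : y ∈ Y) : d ∣ ℓ y :=
    dvd_of_forall_dvd_mul (fun _ he => isRelPrime_X_sub_C_X_sub_C zero_ne_one (y 0) (y 1)
      (he 0) (he 1)) (hdvd_mul y hy)
  rw [isUnit_iff_dvd_one, ← hY.sum_eq_one_of_isFundamental hℓ]
  exact Finset.dvd_sum hdvd

lemma span_eq_of_linearIndependent (hY : Poised n Y) {h : Fin (n + 2) → BPoly}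
    (hmem : ∀ l, h l ∈ PiLE (n + 1) ⊓ vSub (Y : Set Pt)) (hind : LinearIndependent ℝ h) :
    Submodule.span ℝ (Set.range h) = PiLE (n + 1) ⊓ vSub (Y : Set Pt) := by
  have hinj := topCoeff_comp_subtype_injective (m := n + 1)
    (W := PiLE (n + 1) ⊓ vSub (Y : Set Pt)) inf_le_left
    fun p hp hlt => hY.eq_zero (mem_PiLE.2 (Nat.le_of_lt_succ hlt)) hp.2
  have := Module.Finite.of_injective _ hinj
  refine Submodule.eq_of_le_of_finrank_le (Submodule.span_le.2 (Set.range_subset_iff.2 hmem)) ?_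
  rw [finrank_span_eq_card hind, Fintype.card_fin]
  simpa using LinearMap.finrank_le_finrank_of_injective hinj

lemma associated_signedMinor (hY : Poised n Y) {h : Fin (n + 2) → BPoly}
    (hmem : ∀ l, h l ∈ PiLE (n + 1) ⊓ vSub (Y : Set Pt)) (hind : LinearIndependent ℝ h)
    {M : Matrix (Fin (n + 1)) (Fin (n + 2)) BPoly} (hM : IsLinSyz n h M)
    (hrk : ratRank M = n + 1) (l : Fin (n + 2)) : Associated (h l) (signedMinor M l) := by
  have hker : M.mulVec h = 0 := funext hM.2
  have hcoprime (d : BPoly) (hd : ∀ l, d ∣ h l) : IsUnit d := by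
    refine hY.isUnit_of_forall_dvd fun f hf => ?_
    rw [← hY.span_eq_of_linearIndependent hmem hind, Submodule.mem_span_range_iff_exists_fun] at hf
    obtain ⟨c, rfl⟩ := hf
    exact Finset.dvd_sum fun l _ => dvd_smul_of_dvd (c l) (hd l)
  have hdvd : h l ∣ signedMinor M l := dvd_of_forall_dvd_mul hcoprime fun l' =>
    ⟨signedMinor M l', (mul_signedMinor_comm_of_mulVec_eq_zero hker l l').symm⟩
  have hdeg : n + 1 ≤ (h l).totalDegree := by
    by_contra! hlt
    exact hind.ne_zero l (hY.eq_zero (mem_PiLE.2 (Nat.le_of_lt_succ hlt)) (hmem l).2)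
  refine associated_of_dvd_of_totalDegree_le hdvd
    (signedMinor_ne_zero_of_mulVec_eq_zero hrk hker (hind.ne_zero l)) (le_trans ?_ hdeg)
  simpa using totalDegree_signedMinor_le (fun a b => mem_PiLE.1 (hM.1 a b)) l

lemma finrank_PiLE_inf_vSub_diff (hY : Poised n Y) (S : Set Pt) :
    Module.finrank ℝ ↥(PiLE n ⊓ vSub ((Y : Set Pt) \ S)) = ((Y : Set Pt) ∩ S).ncard := by
  classical
  have : Fintype ↥((Y : Set Pt) ∩ S) := (Y.finite_toSet.inter_of_left S).fintype
  let evalOn : ↥(PiLE n ⊓ vSub ((Y : Set Pt) \ S)) →ₗ[ℝ] (↥((Y : Set Pt) ∩ S) → ℝ) :=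
    LinearMap.pi (fun y => (aeval y.1).toLinearMap) ∘ₗ Submodule.subtype _
  have evalOn_apply (p y) : evalOn p y = eval y.1 p.1 := rfl
  have hinj : Function.Injective evalOn := by
    refine (injective_iff_map_eq_zero _).2 fun p hp => Subtype.ext (hY.eq_zero p.2.1 fun y hy => ?_)
    by_cases hyS : y ∈ S
    · exact congrFun hp ⟨y, hy, hyS⟩
    · exact p.2.2 y ⟨hy, hyS⟩
  have hsurj : Function.Surjective evalOn := by
    intro f
    obtain ⟨p, ⟨hpdeg, hpY⟩, _⟩ := hY fun y => if hy : y ∈ (Y : Set Pt) ∩ S then f ⟨y, hy⟩ else 0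
    refine ⟨⟨p, hpdeg, fun y hy => ?_⟩, funext fun y => ?_⟩
    · rw [hpY y hy.1, dif_neg fun hyS => hy.2 hyS.2]
    · rw [evalOn_apply, hpY y y.2.1, dif_pos y.2]
  rw [(LinearEquiv.ofBijective evalOn ⟨hinj, hsurj⟩).finrank_eq, Module.finrank_fintype_fun_eq_card,
    ← Nat.card_eq_fintype_card, Nat.card_coe_set_eq]

lemma ncard_inter_zeros_eq_of_forall_dvd (hY : Poised n Y) {k : BPoly} (hk : k.totalDegree = 1)
    {f : Fin (n + 1) → BPoly} (hmem : ∀ l, f l ∈ PiLE (n + 1) ⊓ vSub (Y : Set Pt))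
    (hind : LinearIndependent ℝ f) (hdvd : ∀ l, k ∣ f l) :
    ((Y : Set Pt) ∩ {x | eval x k = 0}).ncard = n + 1 := by
  set W := PiLE n ⊓ vSub ((Y : Set Pt) \ {x | eval x k = 0})
  have hlt (p) (hp : p ∈ W) (hpn : p.totalDegree < n) : p = 0 := by
    have hkp : k * p = 0 := hY.eq_zero
      (mem_PiLE.2 ((totalDegree_mul _ _).trans (by omega))) (mul_mem_vSub_iff.2 hp.2)
    exact (mul_eq_zero.1 hkp).resolve_left (by rintro rfl; simp at hk)
  have hinj := topCoeff_comp_subtype_injective (inf_le_left : W ≤ PiLE n) hlt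
  have := Module.Finite.of_injective _ hinj
  choose q hq using hdvd
  have hqW (l) : q l ∈ W := by
    have hkq := hmem l
    rw [hq l] at hkq
    exact ⟨(mul_mem_PiLE_succ_iff hk).1 hkq.1, mul_mem_vSub_iff.1 hkq.2⟩
  have hqind : LinearIndependent ℝ fun l => (⟨q l, hqW l⟩ : W) :=
    .of_comp (LinearMap.mulLeft ℝ k ∘ₗ W.subtype) (by rwa [funext hq] at hind)
  rw [← hY.finrank_PiLE_inf_vSub_diff]
  refine le_antisymm ?_ ?_
  · simpa using LinearMap.finrank_le_finrank_of_injective hinj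
  · simpa using hqind.fintype_card_le_finrank

end Poised

theorem stmt16_general (n : ℕ) (Y : Finset Pt) (hY : Poised n Y)
    (h : Fin (n + 2) → BPoly)
    (hmem : ∀ i, h i ∈ PiLE (n + 1) ⊓ vSub (Y : Set Pt))
    (hind : LinearIndependent ℝ h)
    (M : Matrix (Fin (n + 1)) (Fin (n + 2)) BPoly)
    (hM : IsLinSyz n h M) (hrk : ratRank M = n + 1)
    (k : BPoly) (hk : k.totalDegree = 1)
    (j : Fin (n + 2)) (hcol : ∀ i, k ∣ M i j) :
    ((Y : Set Pt) ∩ {x | eval x k = 0}).ncard = n + 1 := by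
  have hdvd (l : Fin (n + 1)) : k ∣ h (j.succAbove l) :=
    (hY.associated_signedMinor hmem hind hM hrk _).dvd_iff_dvd_right.2
      (dvd_signedMinor_of_forall_dvd_column (j.succAbove_ne l).symm hcol)
  exact hY.ncard_inter_zeros_eq_of_forall_dvd hk (fun l => hmem _)
    (hind.comp _ j.succAbove_right_injective) hdvd

/-- If a `Π_n`-poised set `Y_n` admits linearly independent
`h_0, …, h_{n+1} ∈ Π_{n+1} ∩ I(Y_n)` with a rank-`(n+1)` linear syzygy matrix
whose `j`-th column equals `k(x)·e_i`, `k` nonconstant linear, then `K = V(k)`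
is a maximal line for `Y_n`: `#(K ∩ Y_n) = n+1`. -/
theorem stmt16 (n : ℕ) (Y : Finset Pt) (hY : Poised n Y)
    (h : Fin (n + 2) → BPoly)
    (hmem : ∀ i, h i ∈ PiLE (n + 1) ⊓ vSub (Y : Set Pt))
    (hind : LinearIndependent ℝ h)
    (M : Matrix (Fin (n + 1)) (Fin (n + 2)) BPoly)
    (hM : IsLinSyz n h M) (hrk : ratRank M = n + 1)
    (k : BPoly) (hk : k.totalDegree = 1)
    (i : Fin (n + 1)) (j : Fin (n + 2))
    (hcol : ∀ i' : Fin (n + 1), M i' j = if i' = i then k else 0) :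
    ((Y : Set Pt) ∩ {x | eval x k = 0}).ncard = n + 1 := by
  exact stmt16_general n Y hY h hmem hind M hM hrk k hk j fun i' => by
    rw [hcol]; split_ifs <;> simp
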